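/- Let M be a countable ultrametric space satisfying the infinite spec-extension property. Then for each non-trivial B ∈ Nerv(M) and every finite set 𝒞 of sons of B, the metric subspace on B embeds isometrically into the metric subspace on B \ ∪𝒞. -/

import Mathlib

/-- The spectrum of a point `a`: the set of distances from `a`. -/
def SpecAt {M : Type*} [MetricSpace M] (a : M) : Set ℝ := {r | ∃ x : M, dist a x = r}

/-- The spectrum of a metric space: the set of realized distances. -/
def SpecOf (M : Type*) [MetricSpace M] : Set ℝ := {r | ∃ x y : M, dist x y = r}

/-- The spectrum of `a` within a subset `B`. -/
def SpecIn {M : Type*} [MetricSpace M] (B : Set M) (a : M) : Set ℝ := {r | ∃ x ∈ B, dist a x = r}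

/-- A metric space is ultrametric if it satisfies the strong triangle inequality. -/
def UltraDist (M : Type*) [MetricSpace M] : Prop :=
  ∀ x y z : M, dist x z ≤ max (dist x y) (dist y z)

/-- A metric space is indivisible if for every subset `A`, the space embeds isometrically
into `A` or into its complement. -/
def Indiv (M : Type*) [MetricSpace M] : Prop :=
  ∀ A : Set M, (∃ f : M → M, Isometry f ∧ ∀ x, f x ∈ A) ∨
    (∃ f : M → M, Isometry f ∧ ∀ x, f x ∉ A)

/-- A ball: an open or closed ball of nonnegative radius. -/
def IsBallM {M : Type*} [MetricSpace M] (B : Set M) : Prop :=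
  ∃ (a : M) (r : ℝ), 0 ≤ r ∧ (B = Metric.ball a r ∨ B = Metric.closedBall a r)

/-- The nerve of a metric space: closed balls whose radius is a realized distance
from the center. -/
def NervOf (M : Type*) [MetricSpace M] : Set (Set M) :=
  {B | ∃ (a : M) (r : ℝ), r ∈ SpecAt a ∧ B = Metric.closedBall a r}

/-- The sons of a set `B` of diameter `r`: the open balls of radius `r` centered in `B`. -/
def SonOf {M : Type*} [MetricSpace M] (B : Set M) : Set (Set M) :=
  {S | ∃ a ∈ B, S = Metric.ball a (Metric.diam B)}

/-- A space is spec-endogeneous when every local spec-embedding extends to an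
isometric self-embedding. -/
def SpecEndog (M : Type*) [MetricSpace M] : Prop :=
  ∀ (A : Set M) (f : M → M),
    (∀ x ∈ A, ∀ y ∈ A, dist (f x) (f y) = dist x y) →
    (∀ x ∈ A, SpecAt x ⊆ SpecAt (f x)) →
    ∃ g : M → M, Isometry g ∧ ∀ x ∈ A, g x = f x

/-- The spec-extension property. -/
def SpecExt (M : Type*) [MetricSpace M] : Prop :=
  ∀ x y y' : M, x ≠ y → SpecAt y ⊆ SpecAt y' →
    ∃ x' : M, dist y' x' = dist x y ∧ SpecAt x ⊆ SpecAt x'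

/-- The infinite spec-extension property. -/
def InfSpecExt (M : Type*) [MetricSpace M] : Prop :=
  ∀ x y y' : M, x ≠ y → SpecAt y ⊆ SpecAt y' →
    ∃ S : Set M, S.Infinite ∧
      (∀ z ∈ S, dist y' z = dist x y ∧ SpecAt x ⊆ SpecAt z) ∧
      (∀ z ∈ S, ∀ z' ∈ S, z ≠ z' → dist z z' = dist x y)

/-!
The embedding is built one point at a time along an enumeration of the domain, through finite
partial isometries that never shrink spectra. To place a new point `x`, let `p ↦ p'` be the pair
with `p` nearest to `x`. The infinite spec-extension property provides infinitely many candidates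
at distance `dist x p` from `p'` and from each other, and an open ball of that radius contains at
most one of them, so some candidate `x'` is at least that far from all the points already used and
from the centers of the sons to be avoided. In an ultrametric space being far from `q` in this
sense forces `dist x' q = max (dist x' p') (dist p' q)`: the distances to the earlier points come
out right, and `x'` inherits from `p'` the property of lying outside the forbidden sons.
-/

open Metric Set

theorem mem_sdiff_biUnion_ball {X : Type*} [PseudoMetricSpace X] {S T : Set X} {ρ : ℝ} {x : X} :
    x ∈ S \ ⋃ t ∈ T, ball t ρ ↔ x ∈ S ∧ ∀ t ∈ T, ρ ≤ dist x t := by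
  simp only [mem_sdiff, mem_iUnion, mem_ball, exists_prop, not_exists, not_and, not_lt]

section Ultrametric

variable {X : Type*} [PseudoMetricSpace X] [IsUltrametricDist X]

theorem dist_eq_max_of_dist_le {x y z : X} (h : dist x y ≤ dist x z) :
    dist x z = max (dist x y) (dist y z) := by
  refine le_antisymm (dist_triangle_max x y z) (max_le h ?_)
  calc dist y z ≤ max (dist y x) (dist x z) := dist_triangle_max y x z
    _ = dist x z := by rw [dist_comm y x, max_eq_right h]

theorem subsingleton_inter_ball_of_pairwise_le_dist {S : Set X} {ρ : ℝ}
    (hS : S.Pairwise fun x y ↦ ρ ≤ dist x y) (t : X) : (S ∩ ball t ρ).Subsingleton := by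
  rintro x ⟨hxS, hxt⟩ y ⟨hyS, hyt⟩
  refine hS.eq hxS hyS (not_le.2 ?_)
  calc dist x y ≤ max (dist x t) (dist t y) := dist_triangle_max x t y
    _ < ρ := max_lt hxt (mem_ball'.1 hyt)

theorem infinite_sdiff_biUnion_ball_of_pairwise_le_dist {S T : Set X} {ρ : ℝ} (hS : S.Infinite)
    (hsep : S.Pairwise fun x y ↦ ρ ≤ dist x y) (hT : T.Finite) :
    (S \ ⋃ t ∈ T, ball t ρ).Infinite := by
  have hfin : (S ∩ ⋃ t ∈ T, ball t ρ).Finite := by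
    rw [inter_iUnion₂]
    exact hT.biUnion fun t _ ↦ (subsingleton_inter_ball_of_pairwise_le_dist hsep t).finite
  simpa only [sdiff_self_inter] using hS.sdiff hfin

end Ultrametric

theorem exists_function_of_finset_extension {α β : Type*} [DecidableEq (α × β)] {A : Set α}
    (hA : A.Countable) {good : Finset (α × β) → Prop} (hempty : good ∅)
    (hinsert : ∀ s, good s → ∀ a ∈ A, ∃ b, good (insert (a, b) s)) :
    ∃ f : A → β, ∀ t : Finset A, ∃ s, good s ∧ ∀ x ∈ t, (x.1, f x) ∈ s := by
  classical
  have := hA.to_subtype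
  let _ : Encodable A := Encodable.ofCountable A
  let definedAt (x : A) : Order.Cofinal {s // good s} :=
    { carrier := {s | ∃ b, (x.1, b) ∈ s.1}
      isCofinal := fun s ↦
        let ⟨b, hb⟩ := hinsert s.1 s.2 x.1 x.2
        ⟨⟨_, hb⟩, ⟨b, Finset.mem_insert_self _ _⟩, Finset.subset_insert _ _⟩ }
  let I := Order.idealOfCofinals ⟨∅, hempty⟩ definedAt
  have hmeets (x : A) : ∃ b, ∃ s : I, (x.1, b) ∈ s.1.1 :=
    let ⟨s, ⟨b, hb⟩, hs⟩ := Order.cofinal_meets_idealOfCofinals ⟨∅, hempty⟩ definedAt x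
    ⟨b, ⟨s, hs⟩, hb⟩
  choose f stage hstage using hmeets
  refine ⟨f, fun t ↦ ?_⟩
  have : Nonempty I := I.nonempty.to_subtype
  obtain ⟨s, hs⟩ := (directedOn_iff_directed.1 I.directed).finset_le (t.image stage)
  exact ⟨s.1.1, s.1.2, fun x hx ↦ hs _ (Finset.mem_image_of_mem stage hx) (hstage x)⟩

section Spectrum

variable {M : Type*} [MetricSpace M]

/-- A local spec-embedding: a partial isometry of `M` under which the spectrum of a point can only
grow. It is encoded by its graph; preservation of distances makes the graph single-valued. -/
structure IsLocalSpecEmbedding (s : Set (M × M)) : Prop where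
  dist_eq : ∀ p ∈ s, ∀ q ∈ s, dist p.2 q.2 = dist p.1 q.1
  specAt_subset : ∀ p ∈ s, SpecAt p.1 ⊆ SpecAt p.2

namespace IsLocalSpecEmbedding

variable {s : Set (M × M)}

theorem empty : IsLocalSpecEmbedding (∅ : Set (M × M)) :=
  ⟨by simp, by simp⟩

theorem insert (hs : IsLocalSpecEmbedding s) {x x' : M} (hspec : SpecAt x ⊆ SpecAt x')
    (hdist : ∀ q ∈ s, dist x' q.2 = dist x q.1) :
    IsLocalSpecEmbedding (insert (x, x') s) where
  dist_eq := by
    rintro p (rfl | hp) q (rfl | hq)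
    · simp only [dist_self]
    · exact hdist q hq
    · simpa only [dist_comm] using hdist p hp
    · exact hs.dist_eq p hp q hq
  specAt_subset := by
    rintro p (rfl | hp)
    exacts [hspec, hs.specAt_subset p hp]

end IsLocalSpecEmbedding

variable [IsUltrametricDist M]

theorem mem_specAt_of_dist_le {a x : M} {r : ℝ} (hr : r ∈ SpecAt a) (hx : dist a x ≤ r) :
    r ∈ SpecAt x := by
  obtain ⟨b, rfl⟩ := hr
  have hmax : dist a b = max (dist a x) (dist x b) := dist_eq_max_of_dist_le hx
  rcases max_choice (dist a x) (dist x b) with h | h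
  · exact ⟨a, by rw [hmax, h, dist_comm]⟩
  · exact ⟨b, by rw [hmax, h]⟩

theorem diam_closedBall_of_mem_specAt {a : M} {r : ℝ} (hr : r ∈ SpecAt a) :
    diam (closedBall a r) = r := by
  obtain ⟨b, rfl⟩ := hr
  refine le_antisymm (diam_le_of_forall_dist_le dist_nonneg fun x hx y hy ↦ ?_)
    (dist_le_diam_of_mem isBounded_closedBall (mem_closedBall_self dist_nonneg)
      (mem_closedBall'.2 le_rfl))
  exact (dist_triangle_max x a y).trans (max_le hx (mem_closedBall'.1 hy))

namespace InfSpecExt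

theorem exists_forall_le_dist (h : InfSpecExt M) {x y y' : M} (hxy : x ≠ y)
    (hspec : SpecAt y ⊆ SpecAt y') {T : Set M} (hT : T.Finite) :
    ∃ x', dist x' y' = dist x y ∧ SpecAt x ⊆ SpecAt x' ∧ ∀ t ∈ T, dist x y ≤ dist x' t := by
  obtain ⟨S, hS, hSy, hsep⟩ := h x y y' hxy hspec
  obtain ⟨x', hx'⟩ := (infinite_sdiff_biUnion_ball_of_pairwise_le_dist hS
    (fun z hz z' hz' hne ↦ (hsep z hz z' hz' hne).ge) hT).nonempty
  obtain ⟨hx'S, hfar⟩ := mem_sdiff_biUnion_ball.1 hx'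
  obtain ⟨hdist, hspec'⟩ := hSy x' hx'S
  exact ⟨x', by rw [dist_comm, hdist], hspec', hfar⟩

theorem exists_mem_closedBall_forall_le_dist (h : InfSpecExt M) {x : M} {r : ℝ}
    (hr : r ∈ SpecAt x) (hr₀ : r ≠ 0) {T : Set M} (hT : T.Finite) :
    ∃ x' ∈ closedBall x r, SpecAt x ⊆ SpecAt x' ∧ ∀ t ∈ T, r ≤ dist x' t := by
  obtain ⟨c, rfl⟩ := hr
  obtain ⟨x', hdist, hspec, hfar⟩ :=
    h.exists_forall_le_dist (dist_ne_zero.1 hr₀) (Subset.refl (SpecAt c)) hT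
  refine ⟨x', ?_, hspec, hfar⟩
  calc dist x' x ≤ max (dist x' c) (dist c x) := dist_triangle_max x' c x
    _ = dist x c := by rw [hdist, dist_comm c x, max_self]

theorem exists_isLocalSpecEmbedding_insert (h : InfSpecExt M) {s : Set (M × M)}
    (hs : IsLocalSpecEmbedding s) (hfin : s.Finite) (hne : s.Nonempty) (x : M) {T : Set M}
    (hT : T.Finite) :
    ∃ x', IsLocalSpecEmbedding (insert (x, x') s) ∧ ∃ p ∈ s, ∀ t ∈ T, dist p.2 t ≤ dist x' t := by
  obtain ⟨⟨p, p'⟩, hp, hnearest⟩ := exists_min_image s (fun q ↦ dist x q.1) hfin hne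
  rcases eq_or_ne x p with rfl | hxp
  · exact ⟨p', by rwa [insert_eq_of_mem hp], (x, p'), hp, fun t _ ↦ le_rfl⟩
  obtain ⟨x', hdist, hspec, hfar⟩ :=
    h.exists_forall_le_dist hxp (hs.specAt_subset _ hp) (hT.union (hfin.image Prod.snd))
  have hdist_max : ∀ t ∈ T ∪ Prod.snd '' s, dist x' t = max (dist x' p') (dist p' t) :=
    fun t ht ↦ dist_eq_max_of_dist_le (hdist.trans_le (hfar t ht))
  refine ⟨x', hs.insert hspec fun q hq ↦ ?_, (p, p'), hp, fun t ht ↦ ?_⟩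
  · calc dist x' q.2 = max (dist x' p') (dist p' q.2) :=
          hdist_max _ (mem_union_right T (mem_image_of_mem Prod.snd hq))
      _ = max (dist x p) (dist p q.1) := by rw [hdist, hs.dist_eq _ hp q hq]
      _ = dist x q.1 := (dist_eq_max_of_dist_le (hnearest q hq)).symm
  · rw [hdist_max t (mem_union_left _ ht)]
    exact le_max_right _ _

theorem exists_isLocalSpecEmbedding_insert_of_subset_closedBall (h : InfSpecExt M) {a : M}
    {r : ℝ} (hr : r ∈ SpecAt a) (hr₀ : r ≠ 0) {T : Set M} (hT : T.Finite) {s : Set (M × M)}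
    (hs : IsLocalSpecEmbedding s) (hfin : s.Finite)
    (hsub : s ⊆ closedBall a r ×ˢ (closedBall a r \ ⋃ t ∈ T, ball t r)) {x : M}
    (hx : x ∈ closedBall a r) :
    ∃ x' ∈ closedBall a r \ ⋃ t ∈ T, ball t r, IsLocalSpecEmbedding (insert (x, x') s) := by
  rcases s.eq_empty_or_nonempty with rfl | hne
  · have hrx : r ∈ SpecAt x := mem_specAt_of_dist_le hr (mem_closedBall'.1 hx)
    obtain ⟨x', hx', hspec, hfar⟩ := h.exists_mem_closedBall_forall_le_dist hrx hr₀ hT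
    rw [← IsUltrametricDist.closedBall_eq_of_mem hx] at hx'
    exact ⟨x', mem_sdiff_biUnion_ball.2 ⟨hx', hfar⟩, .insert .empty hspec (by simp)⟩
  · obtain ⟨x', hs', ⟨p, p'⟩, hp, hfar⟩ :=
      h.exists_isLocalSpecEmbedding_insert hs hfin hne x hT
    obtain ⟨hpB, hp'⟩ := hsub hp
    obtain ⟨hp'B, hp'T⟩ := mem_sdiff_biUnion_ball.1 hp'
    refine ⟨x', mem_sdiff_biUnion_ball.2 ⟨?_, fun t ht ↦ (hp'T t ht).trans (hfar t ht)⟩, hs'⟩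
    rw [IsUltrametricDist.closedBall_eq_of_mem hp'B]
    calc dist x' p' = dist x p :=
          hs'.dist_eq _ (mem_insert _ s) _ (mem_insert_of_mem _ hp)
      _ ≤ r := by rwa [IsUltrametricDist.closedBall_eq_of_mem hpB] at hx

theorem exists_isometry_closedBall_sdiff (h : InfSpecExt M) {a : M} {r : ℝ} (hr : r ∈ SpecAt a)
    (hr₀ : r ≠ 0) {T : Set M} (hT : T.Finite) {A : Set M} (hA : A.Countable)
    (hAB : A ⊆ closedBall a r) :
    ∃ f : A → ↥(closedBall a r \ ⋃ t ∈ T, ball t r), Isometry f := by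
  classical
  let good (s : Finset (M × M)) : Prop := IsLocalSpecEmbedding (s : Set (M × M)) ∧
    (s : Set (M × M)) ⊆ closedBall a r ×ˢ (closedBall a r \ ⋃ t ∈ T, ball t r)
  have hempty : good ∅ := by
    simpa only [good, Finset.coe_empty] using ⟨.empty, empty_subset _⟩
  have hinsert (s) (hs : good s) (x) (hx : x ∈ A) : ∃ x', good (insert (x, x') s) := by
    obtain ⟨x', hx', hs'⟩ := h.exists_isLocalSpecEmbedding_insert_of_subset_closedBall hr hr₀ hT
      hs.1 s.finite_toSet hs.2 (hAB hx)
    refine ⟨x', ?_⟩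
    simpa only [good, Finset.coe_insert] using ⟨hs', insert_subset ⟨hAB hx, hx'⟩ hs.2⟩
  obtain ⟨f, hf⟩ := exists_function_of_finset_extension hA hempty hinsert
  have hmem (x : A) : f x ∈ closedBall a r \ ⋃ t ∈ T, ball t r := by
    obtain ⟨s, hs, hxs⟩ := hf {x}
    exact (hs.2 (hxs x (Finset.mem_singleton_self x))).2
  refine ⟨fun x ↦ ⟨f x, hmem x⟩, .of_dist_eq fun x y ↦ ?_⟩
  obtain ⟨s, hs, hxys⟩ := hf {x, y}
  exact hs.1.dist_eq _ (hxys x (by simp)) _ (hxys y (by simp))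

end InfSpecExt

end Spectrum

theorem stmt_11_general {M : Type*} [MetricSpace M] (hM : UltraDist M) (h : InfSpecExt M)
    {B : Set M} (hB : B ∈ NervOf M) (hnt : B.Nontrivial) {𝒞 : Set (Set M)} (h𝒞 : 𝒞 ⊆ SonOf B)
    (hfin : 𝒞.Finite) {A : Set M} (hA : A.Countable) (hAB : A ⊆ B) :
    ∃ f : A → ↥(B \ ⋃₀ 𝒞), Isometry f := by
  have : IsUltrametricDist M := ⟨hM⟩
  obtain ⟨a, r, hr, rfl⟩ := hB
  have hr₀ : r ≠ 0 := by
    rintro rfl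
    exact not_nontrivial_singleton (closedBall_zero (x := a) ▸ hnt)
  have h𝒞_image : 𝒞 ⊆ (ball · r) '' closedBall a r := by
    intro C hC
    obtain ⟨c, hc, rfl⟩ := h𝒞 hC
    exact ⟨c, hc, by rw [diam_closedBall_of_mem_specAt hr]⟩
  obtain ⟨T, -, hT, rfl⟩ :=
    (exists_subset_image_finite_and (p := (· = 𝒞))).1 ⟨𝒞, h𝒞_image, hfin, rfl⟩
  rw [sUnion_image]
  exact h.exists_isometry_closedBall_sdiff hr hr₀ hT hA hAB

/-- In a countable ultrametric space with the infinite spec-extension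
property, every nontrivial member B of the nerve embeds isometrically into B minus
any finite union of its sons. -/
theorem stmt_11 {M : Type*} [MetricSpace M] [Countable M]
    (hM : UltraDist M) (h : InfSpecExt M) :
    ∀ B ∈ NervOf M, B.Nontrivial → ∀ 𝒞 : Set (Set M), 𝒞 ⊆ SonOf B → 𝒞.Finite →
      ∃ f : ↥B → ↥(B \ ⋃₀ 𝒞), Isometry f :=
  fun _ hB hnt _ h𝒞 hfin ↦ stmt_11_general hM h hB hnt h𝒞 hfin (to_countable _) subset_rfl
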